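/- Let T > 0 and let (w_k)_{k∈ℕ} be a sequence of independent standard one-dimensional Brownian motions on a probability space (Ω, F, P), extended by w_k(t) = 0 for t ≤ 0. For n ∈ ℕ set σ = T/2^n and, for t ∈ [0,T], ẇ^n_k(t) = σ^{-1} ( w_k(⌊t/σ⌋σ) − w_k((⌊t/σ⌋ − 1)σ) ), where ⌊·⌋ is the floor function. Then there exists a constant δ₀ > 0 such that for every δ > δ₀/√T and every t ∈ [0,T], lim_{n→∞} P( sup_{0≤s≤t} ( ∑_{k=1}^n |ẇ^n_k(s)|^2 )^{1/2} > δ n 2^{n/2} ) = 0. -/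

import Mathlib

open MeasureTheory ProbabilityTheory Filter

/-- A standard one-dimensional Brownian motion (extended by `0` for `t ≤ 0`):
measurable marginals, continuous paths, zero for nonpositive times, Gaussian
increments `w t − w s ∼ N(0, t − s)` for `0 ≤ s ≤ t`, and independent increments. -/
structure IsStandardBrownian {Ω : Type*} [MeasurableSpace Ω] (P : Measure Ω)
    (w : ℝ → Ω → ℝ) : Prop where
  meas : ∀ t, Measurable (w t)
  cont : ∀ ω, Continuous fun t => w t ω
  zero_nonpos : ∀ t ≤ (0 : ℝ), ∀ ω, w t ω = 0
  incr_gauss : ∀ s t : ℝ, 0 ≤ s → s ≤ t →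
    P.map (fun ω => w t ω - w s ω) = gaussianReal 0 (Real.toNNReal (t - s))
  incr_indep : ∀ (n : ℕ) (t : Fin (n + 1) → ℝ), Monotone t → 0 ≤ t 0 →
    iIndepFun
      (fun i : Fin n => fun ω => w (t i.succ) ω - w (t i.castSucc) ω) P

/-!
The speed `ẇⁿ_k` takes only the `2ⁿ + 1` values attached to the mesh points in `[0, T]`, so the
supremum is a finite maximum, and a Euclidean norm exceeding `a √n` in dimension `n` forces a
coordinate to exceed `a`. Each value is Gaussian with variance at most `1/σ = 2ⁿ/T`, so a
union bound over mesh points and coordinates with `a = δ √n 2^{n/2}` leaves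
`n (2ⁿ + 1) · 2 exp(-δ² T n / 2)`. This tends to `0` as soon as `δ² T > 2 log 2`, that is,
with `δ₀ = √(2 log 2)`.
-/

section SubgaussianTails

variable {Ω : Type*} [MeasurableSpace Ω] {μ : Measure Ω}

lemma hasSubgaussianMGF_mono {X : Ω → ℝ} {c d : NNReal} (hX : HasSubgaussianMGF X c μ)
    (hcd : c ≤ d) : HasSubgaussianMGF X d μ where
  integrable_exp_mul := hX.integrable_exp_mul
  mgf_le t := (hX.mgf_le t).trans (by gcongr)

lemma hasSubgaussianMGF_of_map_eq_gaussianReal {X : Ω → ℝ} {v : NNReal}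
    (hX : μ.map X = gaussianReal 0 v) : HasSubgaussianMGF X v μ where
  integrable_exp_mul t := by
    have hX_meas : AEMeasurable X μ :=
      aemeasurable_of_map_neZero (by rw [hX]; infer_instance)
    have h_int := integrable_exp_mul_gaussianReal (μ := 0) (v := v) t
    rw [← hX] at h_int
    exact h_int.comp_aemeasurable hX_meas
  mgf_le t := by
    rw [mgf_gaussianReal hX, zero_mul, zero_add]

lemma measure_le_abs_le_of_hasSubgaussianMGF {X : Ω → ℝ} {c : NNReal}
    (hX : HasSubgaussianMGF X c μ) {a : ℝ} (ha : 0 ≤ a) :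
    μ {ω | a ≤ |X ω|} ≤ ENNReal.ofReal (2 * Real.exp (-a ^ 2 / (2 * c))) := by
  have : IsFiniteMeasure μ := by
    simpa [integrable_const_iff_isFiniteMeasure] using hX.integrable_exp_mul 0
  have h_union : {ω | a ≤ |X ω|} = {ω | a ≤ X ω} ∪ {ω | a ≤ (-X) ω} :=
    Set.ext fun ω => le_abs (a := a) (b := X ω)
  rw [← ofReal_measureReal, h_union, two_mul]
  exact ENNReal.ofReal_le_ofReal <| (measureReal_union_le _ _).trans <|
    add_le_add (hX.measure_ge_le ha) (hX.neg.measure_ge_le ha)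

lemma exists_lt_abs_of_mul_sqrt_card_lt_sqrt_sum_sq {ι : Type*} {K : Finset ι} {x : ι → ℝ}
    {a : ℝ} (ha : 0 ≤ a) (h : a * √(K.card : ℝ) < √(∑ k ∈ K, x k ^ 2)) :
    ∃ k ∈ K, a < |x k| := by
  contrapose! h
  refine Real.sqrt_le_iff.2 ⟨by positivity, ?_⟩
  calc ∑ k ∈ K, x k ^ 2 ≤ K.card • a ^ 2 :=
        Finset.sum_le_card_nsmul _ _ _ fun k hk => sq_le_sq.2 (by
          rw [abs_of_nonneg ha]
          exact h k hk)
    _ = (a * √(K.card : ℝ)) ^ 2 := by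
        rw [mul_pow, Real.sq_sqrt (Nat.cast_nonneg _), nsmul_eq_mul, mul_comm]

lemma measure_exists_mul_sqrt_card_lt_sqrt_sum_sq_le {ι κ : Type*} {J : Finset κ}
    {K : Finset ι} {Y : κ → ι → Ω → ℝ} {c : NNReal}
    (hY : ∀ j ∈ J, ∀ k ∈ K, HasSubgaussianMGF (Y j k) c μ) {a : ℝ} (ha : 0 ≤ a) :
    μ {ω | ∃ j ∈ J, a * √(K.card : ℝ) < √(∑ k ∈ K, Y j k ω ^ 2)} ≤
      ENNReal.ofReal (J.card * K.card * (2 * Real.exp (-a ^ 2 / (2 * c)))) := by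
  have h_subset : {ω | ∃ j ∈ J, a * √(K.card : ℝ) < √(∑ k ∈ K, Y j k ω ^ 2)} ⊆
      ⋃ p ∈ J ×ˢ K, {ω | a ≤ |Y p.1 p.2 ω|} := by
    rintro ω ⟨j, hj, h_lt⟩
    obtain ⟨k, hk, hak⟩ := exists_lt_abs_of_mul_sqrt_card_lt_sqrt_sum_sq ha h_lt
    exact Set.mem_biUnion (x := (j, k)) (Finset.mk_mem_product hj hk) hak.le
  calc μ {ω | ∃ j ∈ J, a * √(K.card : ℝ) < √(∑ k ∈ K, Y j k ω ^ 2)}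
      ≤ ∑ p ∈ J ×ˢ K, μ {ω | a ≤ |Y p.1 p.2 ω|} :=
        (measure_mono h_subset).trans (measure_biUnion_finset_le _ _)
    _ ≤ (J ×ˢ K).card • ENNReal.ofReal (2 * Real.exp (-a ^ 2 / (2 * c))) :=
        Finset.sum_le_card_nsmul _ _ _ fun p hp =>
          have ⟨hj, hk⟩ := Finset.mem_product.1 hp
          measure_le_abs_le_of_hasSubgaussianMGF (hY _ hj _ hk) ha
    _ = ENNReal.ofReal (J.card * K.card * (2 * Real.exp (-a ^ 2 / (2 * c)))) := by
        rw [← ENNReal.ofReal_nsmul, Finset.card_product, nsmul_eq_mul, Nat.cast_mul]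

end SubgaussianTails

/-- A real process whose increments are sub-Gaussian with the elapsed time as variance proxy.
Negative times are included, so that the first mesh interval `[-σ, 0]` is not a special case. -/
def HasSubgaussianIncrements {Ω : Type*} [MeasurableSpace Ω] (P : Measure Ω)
    (w : ℝ → Ω → ℝ) : Prop :=
  ∀ ⦃s t : ℝ⦄, s ≤ t → HasSubgaussianMGF (fun ω => w t ω - w s ω) (t - s).toNNReal P

/-- The slope of `w` over the mesh interval `[(j - 1)σ, jσ]`. The Wong–Zakai derivative of `w`
with mesh `σ` is `s ↦ meshSlope w σ ⌊s / σ⌋`. -/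
noncomputable def meshSlope {Ω : Type*} (w : ℝ → Ω → ℝ) (σ : ℝ) (j : ℤ) (ω : Ω) : ℝ :=
  (w (j * σ) ω - w ((j - 1) * σ) ω) / σ

section MeshSlope

variable {Ω : Type*} [MeasurableSpace Ω] {P : Measure Ω}

lemma IsStandardBrownian.hasSubgaussianIncrements {w : ℝ → Ω → ℝ}
    (hw : IsStandardBrownian P w) : HasSubgaussianIncrements P w := by
  intro s t hst
  have h_posPart (r : ℝ) : w r = w (max r 0) := by
    rcases le_total r 0 with hr | hr
    · rw [max_eq_right hr]
      ext ω
      rw [hw.zero_nonpos r hr, hw.zero_nonpos 0 le_rfl]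
    · rw [max_eq_left hr]
  rw [h_posPart s, h_posPart t]
  have h_elapsed : max t 0 - max s 0 ≤ t - s := by grind
  exact hasSubgaussianMGF_mono (hasSubgaussianMGF_of_map_eq_gaussianReal
    (hw.incr_gauss _ _ (le_max_right s 0) (max_le_max_right 0 hst)))
    (Real.toNNReal_mono h_elapsed)

lemma HasSubgaussianIncrements.hasSubgaussianMGF_meshSlope {w : ℝ → Ω → ℝ}
    (hw : HasSubgaussianIncrements P w) {σ : ℝ} (hσ : 0 < σ) (j : ℤ) :
    HasSubgaussianMGF (meshSlope w σ j) σ⁻¹.toNNReal P := by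
  have h_incr := (hw (show ((j : ℝ) - 1) * σ ≤ j * σ by nlinarith)).const_mul σ⁻¹
  refine hasSubgaussianMGF_mono (h_incr.congr (ae_of_all _ fun ω => ?_)) (NNReal.coe_le_coe.1 ?_)
  · exact (div_eq_inv_mul _ _).symm
  · change σ⁻¹ ^ 2 * ((j * σ - (j - 1) * σ).toNNReal : ℝ) ≤ σ⁻¹.toNNReal
    rw [sub_one_mul, sub_sub_cancel, Real.coe_toNNReal _ hσ.le,
      Real.coe_toNNReal _ (inv_nonneg.2 hσ.le)]
    exact le_of_eq (by field)

lemma measure_lt_iSup_sqrt_sum_meshSlope_sq_le {ι : Type*} {K : Finset ι}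
    {w : ι → ℝ → Ω → ℝ} (hw : ∀ k ∈ K, HasSubgaussianIncrements P (w k))
    {σ t a : ℝ} {m : ℕ} (hσ : 0 < σ) (ht : t ≤ m * σ) (ha : 0 ≤ a) :
    P {ω | a * √(K.card : ℝ) <
        ⨆ s : Set.Icc (0 : ℝ) t, √(∑ k ∈ K, meshSlope (w k) σ ⌊(s : ℝ) / σ⌋ ω ^ 2)} ≤
      ENNReal.ofReal ((m + 1) * K.card * (2 * Real.exp (-(a ^ 2 * σ) / 2))) := by
  have h_floor (s : Set.Icc (0 : ℝ) t) : ⌊(s : ℝ) / σ⌋ ∈ Finset.Icc (0 : ℤ) m := by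
    have h_le : (s : ℝ) / σ ≤ m := (div_le_iff₀ hσ).2 (s.2.2.trans ht)
    refine Finset.mem_Icc.2 ⟨Int.floor_nonneg.2 (div_nonneg s.2.1 hσ.le), ?_⟩
    exact_mod_cast (Int.floor_le _).trans h_le
  have h_subset : {ω | a * √(K.card : ℝ) <
        ⨆ s : Set.Icc (0 : ℝ) t, √(∑ k ∈ K, meshSlope (w k) σ ⌊(s : ℝ) / σ⌋ ω ^ 2)} ⊆
      {ω | ∃ j ∈ Finset.Icc (0 : ℤ) m,
        a * √(K.card : ℝ) < √(∑ k ∈ K, meshSlope (w k) σ j ω ^ 2)} := by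
    intro ω
    contrapose!
    intro h_le
    simp only [Set.mem_ofPred_eq, not_exists, not_and, not_lt] at h_le ⊢
    exact Real.iSup_le (fun s => h_le _ (h_floor s)) (by positivity)
  have h_union := (measure_mono h_subset).trans
    (measure_exists_mul_sqrt_card_lt_sqrt_sum_sq_le
      (fun j _ k hk => (hw k hk).hasSubgaussianMGF_meshSlope hσ j) ha)
  have h_card : ((Finset.Icc (0 : ℤ) m).card : ℝ) = m + 1 := by
    simp [Int.card_Icc]
  have h_exponent : -a ^ 2 / (2 * (σ⁻¹.toNNReal : ℝ)) = -(a ^ 2 * σ) / 2 := by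
    rw [Real.coe_toNNReal _ (by positivity)]
    field
  rwa [h_card, h_exponent] at h_union

end MeshSlope

lemma tendsto_pow_add_one_mul_self_mul_pow {r q : ℝ} (hq : |q| < 1) (hrq : |r * q| < 1) :
    Tendsto (fun n : ℕ => (r ^ n + 1) * (n : ℝ) * q ^ n) atTop (nhds 0) := by
  have h_add := (tendsto_self_mul_const_pow_of_abs_lt_one hrq).add
    (tendsto_self_mul_const_pow_of_abs_lt_one hq)
  rw [add_zero] at h_add
  refine h_add.congr fun n => ?_
  rw [mul_pow]
  ring

lemma exp_neg_div_two_lt_half {x : ℝ} (hx : 2 * Real.log 2 < x) :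
    Real.exp (-x / 2) < 1 / 2 := by
  rw [← Real.lt_log_iff_exp_lt (by norm_num), one_div, Real.log_inv]
  linarith

lemma sq_two_rpow_div_two (x : ℝ) : ((2 : ℝ) ^ (x / 2)) ^ 2 = 2 ^ x := by
  rw [← Real.rpow_natCast, ← Real.rpow_mul zero_le_two]
  norm_num

lemma measure_lt_iSup_sqrt_sum_meshSlope_sq_le_pow {Ω : Type*} [MeasurableSpace Ω]
    {P : Measure Ω} {w : ℕ → ℝ → Ω → ℝ} (hw : ∀ k, HasSubgaussianIncrements P (w k))
    {T δ t : ℝ} (hT : 0 < T) (hδ : 0 ≤ δ) (ht : t ≤ T) (n : ℕ) :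
    P {ω | δ * (n : ℝ) * (2 : ℝ) ^ ((n : ℝ) / 2) <
        ⨆ s : Set.Icc (0 : ℝ) t, √(∑ k ∈ Finset.Icc 1 n,
          meshSlope (w k) (T / 2 ^ n) ⌊(s : ℝ) / (T / 2 ^ n)⌋ ω ^ 2)} ≤
      ENNReal.ofReal (2 * ((2 ^ n + 1) * n * Real.exp (-(δ ^ 2 * T) / 2) ^ n)) := by
  have h_mesh : t ≤ ((2 ^ n : ℕ) : ℝ) * (T / 2 ^ n) := by
    push_cast
    rwa [mul_div_cancel₀ T (by positivity)]
  have h_union := measure_lt_iSup_sqrt_sum_meshSlope_sq_le (K := Finset.Icc 1 n)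
    (a := δ * √n * 2 ^ ((n : ℝ) / 2)) (fun k _ => hw k) (by positivity) h_mesh
    (by positivity)
  have h_threshold : δ * √n * 2 ^ ((n : ℝ) / 2) * √(n : ℝ) = δ * n * 2 ^ ((n : ℝ) / 2) := by
    rw [mul_right_comm, mul_assoc δ, Real.mul_self_sqrt (Nat.cast_nonneg n)]
  have h_exponent : -((δ * √n * 2 ^ ((n : ℝ) / 2)) ^ 2 * (T / 2 ^ n)) / 2 =
      n * (-(δ ^ 2 * T) / 2) := by
    rw [mul_pow, mul_pow, Real.sq_sqrt (Nat.cast_nonneg n), sq_two_rpow_div_two,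
      Real.rpow_natCast]
    field
  rw [Nat.card_Icc, Nat.add_sub_cancel, h_threshold, h_exponent, Real.exp_nat_mul] at h_union
  convert h_union using 2
  push_cast
  ring

theorem wong_zakai_sup_norm_general {Ω : Type*} [MeasurableSpace Ω] {P : Measure Ω}
    {w : ℕ → ℝ → Ω → ℝ} {T δ t : ℝ} (hT : 0 < T) (hδ : √(2 * Real.log 2) / √T < δ)
    (ht : t ∈ Set.Icc 0 T) (hw : ∀ k, HasSubgaussianIncrements P (w k)) :
    Tendsto (fun n : ℕ =>
      P {ω | δ * (n : ℝ) * (2 : ℝ) ^ ((n : ℝ) / 2) <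
        ⨆ s : Set.Icc (0 : ℝ) t, √(∑ k ∈ Finset.Icc 1 n,
          meshSlope (w k) (T / 2 ^ n) ⌊(s : ℝ) / (T / 2 ^ n)⌋ ω ^ 2)})
      atTop (nhds 0) := by
  have hδ_pos : 0 < δ := lt_of_le_of_lt (by positivity) hδ
  have h_log : 2 * Real.log 2 < δ ^ 2 * T := by
    rw [← Real.sqrt_div' _ hT.le, Real.sqrt_lt' hδ_pos] at hδ
    exact (div_lt_iff₀ hT).1 hδ
  have hq_half := exp_neg_div_two_lt_half h_log
  set q : ℝ := Real.exp (-(δ ^ 2 * T) / 2)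
  have hq_pos : 0 < q := Real.exp_pos _
  have h_lim : Tendsto (fun n : ℕ => ENNReal.ofReal (2 * ((2 ^ n + 1) * n * q ^ n)))
      atTop (nhds 0) := by
    have h_real := (tendsto_pow_add_one_mul_self_mul_pow (r := 2) (q := q)
      (by rw [abs_of_pos hq_pos]; linarith)
      (by rw [abs_of_pos (by positivity)]; linarith)).const_mul 2
    simpa using ENNReal.tendsto_ofReal h_real
  exact tendsto_of_tendsto_of_tendsto_of_le_of_le tendsto_const_nhds h_lim (fun _ => zero_le)
    (measure_lt_iSup_sqrt_sum_meshSlope_sq_le_pow hw hT hδ_pos.le ht.2)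

/-- Wong–Zakai estimate (Lemma 2.1 of \cite{ICAM}), second form: there is `δ₀ > 0`
such that for every `δ > δ₀/√T` and `t ∈ [0,T]`,
`P(sup_{0≤s≤t} (∑_{k=1}^n |ẇⁿ_k(s)|²)^{1/2} > δ n 2^{n/2}) → 0` as `n → ∞`,
where `ẇⁿ_k(s) = σ⁻¹(w_k(⌊s/σ⌋σ) − w_k((⌊s/σ⌋−1)σ))` and `σ = T/2ⁿ`. -/
theorem wong_zakai_sup_norm (T : ℝ) (hT : 0 < T)
    {Ω : Type*} [MeasurableSpace Ω] (P : Measure Ω) [IsProbabilityMeasure P]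
    (w : ℕ → ℝ → Ω → ℝ) (hBM : ∀ k, IsStandardBrownian P (w k))
    (hindep : iIndepFun
      (fun (k : ℕ) (ω : Ω) (t : ℝ) => w k t ω) P) :
    ∃ δ₀ : ℝ, 0 < δ₀ ∧ ∀ δ : ℝ, δ₀ / Real.sqrt T < δ → ∀ t ∈ Set.Icc (0 : ℝ) T,
      Tendsto (fun n : ℕ =>
        P {ω | δ * (n : ℝ) * (2 : ℝ) ^ ((n : ℝ) / 2) <
          ⨆ s : Set.Icc (0 : ℝ) t,
            Real.sqrt (∑ k ∈ Finset.Icc 1 n,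
              ((w k ((⌊(s : ℝ) / (T / 2 ^ n)⌋ : ℝ) * (T / 2 ^ n)) ω -
                  w k (((⌊(s : ℝ) / (T / 2 ^ n)⌋ : ℝ) - 1) * (T / 2 ^ n)) ω) /
                (T / 2 ^ n)) ^ (2 : ℕ))})
        atTop (nhds 0) := by
  exact ⟨√(2 * Real.log 2), by positivity, fun δ hδ t ht =>
    wong_zakai_sup_norm_general hT hδ ht fun k => (hBM k).hasSubgaussianIncrements⟩
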